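/- Let n ≥ 1 and k ≥ 1 be integers. Then (Vol C̃ / Vol B_M)^{1/D_M} ≥ (∫_{S_M} ‖f‖_∞ dμ(f))^{-1}, where ‖f‖_∞ = max_{x ∈ S^{n-1}} |f(x)| and Vol denotes D_M-dimensional Lebesgue volume in M. -/

import Mathlib

/-!
Write `N y = ‖φ y‖_∞`. If `N y < 1` then `φ y + r^{2k}` is nonnegative on the unit sphere, hence
everywhere by homogeneity, so `C̃` contains the unit ball of the norm `N`
(`mem_Ctilde_of_supNorm_lt_one`). In polar coordinates the volume of `{N < 1}` is
`D⁻¹ ∫ N(θ)⁻ᴰ dθ` (`volume_gauge_lt_one`), and Jensen's inequality for `t ↦ t⁻ᴰ`, in the form of the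
tangent-line bound `tangent_le_inv_pow` at `a = ∫ N dμ`, bounds it below by `a⁻ᴰ Vol B_M`.

Mathlib's surface measure `toSphere` has to be identified with the abstract rotation-invariant
measure `μ`. This is `isRotInvSphereProb_unique`: the characteristic function of a
rotation-invariant measure depends only on `‖t‖`, and Fubini's theorem applied to
`∫∫ exp (i ‖t‖ ⟪x, s⟫) dμ(x) dν(s)` shows that those of `μ` and `ν` agree.
-/

open MeasureTheory MvPolynomial
open scoped ENNReal RealInnerProductSpace

noncomputable section

/-- Evaluation of a multivariate polynomial at a point of Euclidean space `ℝⁿ`. -/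
def peval {n : ℕ} (p : MvPolynomial (Fin n) ℝ) (x : EuclideanSpace ℝ (Fin n)) : ℝ :=
  MvPolynomial.eval (fun i => x i) p

/-- The `L²(σ)` inner product `⟨f,g⟩ = ∫ f·g dσ` on polynomials. -/
def pinner {n : ℕ} (σ : Measure (EuclideanSpace ℝ (Fin n)))
    (f g : MvPolynomial (Fin n) ℝ) : ℝ :=
  ∫ x, peval f x * peval g x ∂σ

/-- `μ` is a rotation-invariant probability measure concentrated on the unit sphere. -/
def IsRotInvSphereProb {E : Type*} [NormedAddCommGroup E] [NormedSpace ℝ E]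
    [MeasurableSpace E] (μ : Measure E) : Prop :=
  IsProbabilityMeasure μ ∧ μ (Metric.sphere (0 : E) 1)ᶜ = 0 ∧
    ∀ T : E ≃ₗᵢ[ℝ] E, Measure.map T μ = μ

/-- The hyperplane `M` of forms of degree `2k` with integral `0` on the sphere. -/
def Mset (n k : ℕ) (σ : Measure (EuclideanSpace ℝ (Fin n))) :
    Set (MvPolynomial (Fin n) ℝ) :=
  {f | f.IsHomogeneous (2 * k) ∧ ∫ x, peval f x ∂σ = 0}

/-- The form `r^{2k} = (x₁² + ⋯ + xₙ²)^k`. -/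
def rSq (n k : ℕ) : MvPolynomial (Fin n) ℝ :=
  (∑ i : Fin n, X i ^ 2) ^ k

/-- The cone `C` of nonnegative forms of degree `2k`. -/
def Cset (n k : ℕ) : Set (MvPolynomial (Fin n) ℝ) :=
  {f | f.IsHomogeneous (2 * k) ∧ ∀ x : EuclideanSpace ℝ (Fin n), 0 ≤ peval f x}

/-- The cone `Sq` of sums of squares of forms of degree `k`. -/
def Sqset (n k : ℕ) : Set (MvPolynomial (Fin n) ℝ) :=
  {f | ∃ (m : ℕ) (g : Fin m → MvPolynomial (Fin n) ℝ),
    (∀ i, (g i).IsHomogeneous k) ∧ f = ∑ i, g i ^ 2}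

/-- The compact base `C̃ = {f ∈ M : f + r^{2k} ∈ C}`. -/
def Ctilde (n k : ℕ) (σ : Measure (EuclideanSpace ℝ (Fin n))) :
    Set (MvPolynomial (Fin n) ℝ) :=
  {f ∈ Mset n k σ | f + rSq n k ∈ Cset n k}

/-- The compact base `S̃q = {f ∈ M : f + r^{2k} ∈ Sq}`. -/
def Sqtilde (n k : ℕ) (σ : Measure (EuclideanSpace ℝ (Fin n))) :
    Set (MvPolynomial (Fin n) ℝ) :=
  {f ∈ Mset n k σ | f + rSq n k ∈ Sqset n k}

/-- `φ` is a linear isometry (w.r.t. the `L²(σ)` inner product) identifying Euclidean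
`D`-space with the hyperplane `M`; in particular `D = D_M = dim M`. -/
def IsCoordOfM (n k D : ℕ) (σ : Measure (EuclideanSpace ℝ (Fin n)))
    (φ : EuclideanSpace ℝ (Fin D) →ₗ[ℝ] MvPolynomial (Fin n) ℝ) : Prop :=
  Function.Injective φ ∧ Set.range φ = Mset n k σ ∧
    ∀ y z : EuclideanSpace ℝ (Fin D), pinner σ (φ y) (φ z) = ⟪y, z⟫

/-- The `L^∞` norm of a polynomial on the unit sphere `S^{n-1}`. -/
def supNorm {n : ℕ} (f : MvPolynomial (Fin n) ℝ) : ℝ :=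
  sSup ((fun x => |peval f x|) '' Metric.sphere (0 : EuclideanSpace ℝ (Fin n)) 1)

/-- The norm `‖f‖_sq = max {|⟨f, g²⟩| : g ∈ P_{n,k}, ⟨g,g⟩ = 1}`. -/
def sqNorm {n : ℕ} (k : ℕ) (σ : Measure (EuclideanSpace ℝ (Fin n)))
    (f : MvPolynomial (Fin n) ℝ) : ℝ :=
  sSup ((fun g => |pinner σ f (g ^ 2)|) ''
    {g : MvPolynomial (Fin n) ℝ | g.IsHomogeneous k ∧ pinner σ g g = 1})

/-! ### Uniqueness of the rotation-invariant measure on the sphere -/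

theorem exists_isometry_of_norm_eq {E : Type*} [NormedAddCommGroup E] [InnerProductSpace ℝ E]
    {v w : E} (h : ‖v‖ = ‖w‖) : ∃ T : E ≃ₗᵢ[ℝ] E, T v = w :=
  ⟨Submodule.reflection (ℝ ∙ (v - w))ᗮ, Submodule.reflection_sub h⟩

theorem charFun_eq_of_norm_eq {E : Type*} [NormedAddCommGroup E] [InnerProductSpace ℝ E]
    [MeasurableSpace E] [BorelSpace E] {μ : Measure E} (hμ : IsRotInvSphereProb μ)
    {v w : E} (h : ‖v‖ = ‖w‖) : charFun μ v = charFun μ w := by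
  obtain ⟨T, rfl⟩ := exists_isometry_of_norm_eq h
  conv_rhs => rw [← hμ.2.2 T]
  rw [charFun_apply, charFun_apply,
    (show MeasurableEmbedding T from T.toHomeomorph.measurableEmbedding).integral_map]
  simp

/-- Averaging a rotation-invariant characteristic function over the sphere of radius `‖t‖`
returns its value at `t`. -/
theorem integral_charFun_smul {E : Type*} [NormedAddCommGroup E] [InnerProductSpace ℝ E]
    [MeasurableSpace E] [BorelSpace E] {μ ν : Measure E} (hμ : IsRotInvSphereProb μ)
    (hν : IsRotInvSphereProb ν) (t : E) :
    ∫ s, charFun μ (‖t‖ • s) ∂ν = charFun μ t := by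
  have := hν.1
  have h : ∀ᵐ s ∂ν, charFun μ (‖t‖ • s) = charFun μ t := by
    have h0 : ∀ᵐ s ∂ν, s ∈ Metric.sphere (0 : E) 1 := hν.2.1
    filter_upwards [h0] with s hs
    refine charFun_eq_of_norm_eq hμ ?_
    simp [norm_smul, mem_sphere_zero_iff_norm.1 hs]
  rw [integral_congr_ae h]
  simp

/-- Uniqueness of the rotation-invariant probability measure on the sphere: integrating
`exp (i ‖t‖ ⟪x, s⟫)` against `μ ⊗ ν` in either order gives both characteristic functions
at `t`, since each is constant on spheres. -/
theorem isRotInvSphereProb_unique {E : Type*} [NormedAddCommGroup E] [InnerProductSpace ℝ E]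
    [FiniteDimensional ℝ E] [MeasurableSpace E] [BorelSpace E] {μ ν : Measure E}
    (hμ : IsRotInvSphereProb μ) (hν : IsRotInvSphereProb ν) : μ = ν := by
  have := hν.1
  have := hμ.1
  have : CompleteSpace E := FiniteDimensional.complete ℝ E
  refine Measure.ext_of_charFun ?_
  ext t
  rw [← integral_charFun_smul hμ hν t, ← integral_charFun_smul hν hμ t]
  simp only [charFun_apply]
  rw [integral_integral_swap]
  · simp only [real_inner_smul_right, real_inner_comm]
  · refine Integrable.of_bound (C := 1) (Continuous.aestronglyMeasurable ?_) ?_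
    · simp only [Function.uncurry_def]
      fun_prop
    · refine Filter.Eventually.of_forall fun p => ?_
      simp only [Function.uncurry_def]
      rw [Complex.norm_exp_ofReal_mul_I]

open scoped Pointwise in
/-- Mathlib's surface measure is invariant under linear isometries, because it is computed from
the volumes of the cones `(0, 1) • s`. -/
theorem map_toSphere_map_isometry {D : ℕ}
    (T : EuclideanSpace ℝ (Fin D) ≃ₗᵢ[ℝ] EuclideanSpace ℝ (Fin D)) :
    Measure.map T (Measure.map Subtype.val
      (volume : Measure (EuclideanSpace ℝ (Fin D))).toSphere) =
    Measure.map Subtype.val (volume : Measure (EuclideanSpace ℝ (Fin D))).toSphere := by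
  have hT : Measurable T := T.continuous.measurable
  ext s hs
  rw [Measure.map_apply hT hs, Measure.map_apply measurable_subtype_coe (hT hs),
    Measure.map_apply measurable_subtype_coe hs,
    Measure.toSphere_apply' _ (measurable_subtype_coe (hT hs)),
    Measure.toSphere_apply' _ (measurable_subtype_coe hs)]
  congr 1
  rw [← T.measurePreserving.measure_preimage_emb T.toHomeomorph.measurableEmbedding
    (Set.Ioo (0 : ℝ) 1 • (Subtype.val '' (Subtype.val ⁻¹' s)))]
  congr 1
  ext x
  simp only [Set.mem_smul, Set.mem_preimage, Set.mem_image, Subtype.exists]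
  constructor
  · rintro ⟨r, hr, _, ⟨y, hy, hys, rfl⟩, rfl⟩
    exact ⟨r, hr, T y, ⟨T y, by simpa using hy, hys, rfl⟩, by simp⟩
  · rintro ⟨r, hr, _, ⟨y, hy, hys, rfl⟩, h⟩
    refine ⟨r, hr, T.symm y, ⟨T.symm y, by simpa using hy, by simpa using hys, rfl⟩, ?_⟩
    apply T.injective
    simpa using h

/-- Any rotation-invariant probability measure on the sphere is normalized surface measure. -/
theorem eq_smul_map_toSphere {D : ℕ} (hD : D ≠ 0) {μ : Measure (EuclideanSpace ℝ (Fin D))}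
    (hμ : IsRotInvSphereProb μ) :
    μ = ((volume : Measure (EuclideanSpace ℝ (Fin D))).toSphere Set.univ)⁻¹ •
      Measure.map Subtype.val (volume : Measure (EuclideanSpace ℝ (Fin D))).toSphere := by
  have : Nonempty (Fin D) := ⟨⟨0, Nat.pos_of_ne_zero hD⟩⟩
  refine isRotInvSphereProb_unique hμ ⟨⟨?_⟩, ?_, fun T => ?_⟩
  · rw [Measure.smul_apply, Measure.map_apply measurable_subtype_coe .univ, Set.preimage_univ,
      smul_eq_mul, ENNReal.inv_mul_cancel]
    · exact Measure.measure_univ_ne_zero.2 (Measure.toSphere_ne_zero _)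
    · exact measure_ne_top _ _
  · rw [Measure.smul_apply, Measure.map_apply measurable_subtype_coe
      Metric.isClosed_sphere.measurableSet.compl]
    have : (Subtype.val ⁻¹' (Metric.sphere (0 : EuclideanSpace ℝ (Fin D)) 1)ᶜ :
        Set (Metric.sphere (0 : EuclideanSpace ℝ (Fin D)) 1)) = ∅ := by
      ext x; simp
    rw [this]
    simp
  · rw [Measure.map_smul, map_toSphere_map_isometry]

/-! ### Volume of the unit ball of a gauge -/

/-- Volume of the unit ball of a gauge `N`, in polar coordinates. -/
theorem volume_gauge_lt_one {D : ℕ} (hD : D ≠ 0) {N : EuclideanSpace ℝ (Fin D) → ℝ}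
    (hN : Continuous N) (hpos : ∀ y, y ≠ 0 → 0 < N y)
    (hsmul : ∀ (r : ℝ) y, 0 < r → N (r • y) = r * N y) :
    volume {y | N y < 1} = ∫⁻ θ : Metric.sphere (0 : EuclideanSpace ℝ (Fin D)) 1,
      ENNReal.ofReal ((N θ)⁻¹ ^ D / D) ∂(volume : Measure (EuclideanSpace ℝ (Fin D))).toSphere := by
  have : Nonempty (Fin D) := ⟨⟨0, Nat.pos_of_ne_zero hD⟩⟩
  have hK : MeasurableSet {y | N y < 1} := measurableSet_lt hN.measurable measurable_const
  set P := Measure.measurePreserving_homeomorphUnitSphereProd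
    (volume : Measure (EuclideanSpace ℝ (Fin D))) 
  have hPs := P.symm (homeomorphUnitSphereProd (EuclideanSpace ℝ (Fin D))).toMeasurableEquiv
  have h1 : volume {y | N y < 1} = Measure.comap (Subtype.val : ({0}ᶜ : Set (EuclideanSpace ℝ (Fin D))) → _)
      volume (Subtype.val ⁻¹' {y | N y < 1}) := by
    rw [comap_subtype_coe_apply (measurableSet_singleton _).compl, Subtype.image_preimage_coe,
      Set.inter_comm, ← Set.sdiff_eq, measure_sdiff_null (measure_singleton _)]
  rw [h1, ← hPs.measure_preimage (measurable_subtype_coe hK).nullMeasurableSet,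
    Measure.prod_apply (hPs.measurable (measurable_subtype_coe hK))]
  refine lintegral_congr fun θ => ?_
  have hθ : 0 < N θ := hpos _ (by
    intro h
    have := θ.2
    simp [h] at this)
  have : (Prod.mk θ ⁻¹' (((homeomorphUnitSphereProd (EuclideanSpace ℝ (Fin D))).toMeasurableEquiv.symm) ⁻¹'
      (Subtype.val ⁻¹' {y | N y < 1}))) = Set.Iio (⟨(N θ)⁻¹, inv_pos.2 hθ⟩ : Set.Ioi (0 : ℝ)) := by
    ext r
    have hr : (0 : ℝ) < r := r.2
    simp only [Set.mem_preimage, Set.mem_ofPred_eq, Set.mem_Iio, ← Subtype.coe_lt_coe]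
    change N ((r : ℝ) • (θ : EuclideanSpace ℝ (Fin D))) < 1 ↔ _
    rw [hsmul _ _ hr, lt_inv_comm₀ hr hθ, ← one_div, lt_div_iff₀ hr, mul_comm]
  rw [this, Measure.volumeIoiPow_apply_Iio]
  have hD' : D - 1 + 1 = D := Nat.sub_add_cancel (Nat.pos_of_ne_zero hD)
  simp only [finrank_euclideanSpace_fin, hD']
  congr 2
  exact_mod_cast hD'

/-- The tangent-line inequality at `a` for the convex function `t ↦ t⁻ᴰ`. -/
theorem tangent_le_inv_pow {a t : ℝ} (ha : 0 < a) (ht : 0 < t) (D : ℕ) :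
    a⁻¹ ^ D * (1 + D * (1 - t / a)) ≤ t⁻¹ ^ D := by
  have h1 : 1 + (D : ℝ) * (a / t - 1) ≤ (1 + (a / t - 1)) ^ D :=
    one_add_mul_le_pow (by have := div_pos ha ht; linarith) D
  have h2 : 1 - t / a ≤ a / t - 1 := by
    have : a / t - 1 - (1 - t / a) = (a - t) ^ 2 / (a * t) := by field_simp
    have : 0 ≤ (a - t) ^ 2 / (a * t) := by positivity
    linarith
  calc a⁻¹ ^ D * (1 + D * (1 - t / a)) ≤ a⁻¹ ^ D * (1 + (a / t - 1)) ^ D := by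
        gcongr
        refine le_trans ?_ h1
        gcongr
    _ = t⁻¹ ^ D := by
        rw [← mul_pow]
        congr 1
        field_simp
        ring

/-- The unit ball of a gauge `N` has volume at least `(∫ N dμ)⁻ᴰ` times that of the Euclidean
ball: Jensen's inequality for `t ↦ t⁻ᴰ` applied to the polar-coordinate formula. -/
theorem volume_gauge_lt_one_ge {D : ℕ} (hD : D ≠ 0) {N : EuclideanSpace ℝ (Fin D) → ℝ}
    (hN : Continuous N) (hpos : ∀ y, y ≠ 0 → 0 < N y)
    (hsmul : ∀ (r : ℝ) y, 0 < r → N (r • y) = r * N y)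
    {μ : Measure (EuclideanSpace ℝ (Fin D))} (hμ : IsRotInvSphereProb μ)
    (ha : 0 < ∫ y, N y ∂μ) :
    ENNReal.ofReal ((∫ y, N y ∂μ)⁻¹ ^ D) *
      volume (Metric.ball (0 : EuclideanSpace ℝ (Fin D)) 1) ≤ volume {y | N y < 1} := by
  have : Nonempty (Fin D) := ⟨⟨0, Nat.pos_of_ne_zero hD⟩⟩
  have hD0 : (D : ℝ) ≠ 0 := by exact_mod_cast hD
  set a := ∫ y, N y ∂μ with hadef
  set τ := (volume : Measure (EuclideanSpace ℝ (Fin D))).toSphere with hτ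
  have hc : τ.real Set.univ = D * volume.real (Metric.ball (0 : EuclideanSpace ℝ (Fin D)) 1) := by
    simp [hτ]
  have hcpos : τ.real Set.univ ≠ 0 := by
    rw [hc]
    exact mul_ne_zero hD0 (ENNReal.toReal_pos (Metric.measure_ball_pos _ _ one_pos).ne'
      measure_ball_lt_top.ne).ne'
  have hNi : Integrable (fun θ : Metric.sphere (0 : EuclideanSpace ℝ (Fin D)) 1 => N θ) τ :=
    (hN.comp continuous_subtype_val).integrable_of_hasCompactSupport
      (HasCompactSupport.of_compactSpace _)
  have haτ : ∫ θ, N θ ∂τ = τ.real Set.univ * a := by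
    rw [hadef, eq_smul_map_toSphere hD hμ, integral_smul_measure, ← hτ,
      integral_map measurable_subtype_coe.aemeasurable hN.aestronglyMeasurable, ENNReal.toReal_inv,
      smul_eq_mul, ← mul_assoc]
    rw [← measureReal_def, mul_inv_cancel₀ hcpos, one_mul]
  rw [volume_gauge_lt_one hD hN hpos hsmul]
  have hθ : ∀ θ : Metric.sphere (0 : EuclideanSpace ℝ (Fin D)) 1, 0 < N θ := fun θ => hpos _ (by
    intro h
    have := θ.2
    simp [h] at this)
  have hinv : Integrable (fun θ : Metric.sphere (0 : EuclideanSpace ℝ (Fin D)) 1 =>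
      (N θ)⁻¹ ^ D / D) τ := by
    refine Continuous.integrable_of_hasCompactSupport ?_ (HasCompactSupport.of_compactSpace _)
    exact (((hN.comp continuous_subtype_val).inv₀ fun θ => (hθ θ).ne').pow D).div_const _
  rw [← ofReal_integral_eq_lintegral_ofReal hinv
    (Filter.Eventually.of_forall fun θ => by have := hθ θ; positivity)]
  rw [← ofReal_measureReal measure_ball_lt_top.ne, ← ENNReal.ofReal_mul (by positivity)]
  refine ENNReal.ofReal_le_ofReal ?_
  calc a⁻¹ ^ D * volume.real (Metric.ball (0 : EuclideanSpace ℝ (Fin D)) 1)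
      = ∫ θ : Metric.sphere (0 : EuclideanSpace ℝ (Fin D)) 1,
          a⁻¹ ^ D * (1 + D * (1 - N θ / a)) / D ∂τ := by
        have hi : Integrable (fun θ : Metric.sphere (0 : EuclideanSpace ℝ (Fin D)) 1 =>
            (D : ℝ) * (1 - N θ / a)) τ :=
          ((integrable_const _).sub (hNi.div_const _)).const_mul _
        rw [integral_div, integral_const_mul, integral_add (integrable_const _) hi,
          integral_const_mul, integral_sub (integrable_const _) (hNi.div_const _), integral_div, haτ]
        simp only [integral_const, smul_eq_mul, mul_one]
        rw [hc]
        field_simp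
        ring
    _ ≤ _ := by
        refine integral_mono ?_ hinv fun θ => ?_
        · exact (((integrable_const _).add
            (((integrable_const _).sub (hNi.div_const _)).const_mul _)).const_mul _).div_const _
        · exact div_le_div_of_nonneg_right (tangent_le_inv_pow ha (hθ θ) D) (Nat.cast_nonneg D)

/-! ### The sup norm on forms -/

theorem peval_smul_of_isHomogeneous {n m : ℕ} {p : MvPolynomial (Fin n) ℝ}
    (hp : p.IsHomogeneous m) (c : ℝ) (x : EuclideanSpace ℝ (Fin n)) :
    peval p (c • x) = c ^ m * peval p x := by
  unfold peval
  simp only [MvPolynomial.eval_eq, Finset.mul_sum]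
  refine Finset.sum_congr rfl fun d hd => ?_
  have hdeg : ∑ i ∈ d.support, d i = m := by
    have := hp (MvPolynomial.mem_support_iff.1 hd)
    rwa [Finsupp.weight_apply, Finsupp.sum_congr (g2 := fun _ a => a) (by simp)] at this
  simp only [PiLp.smul_apply, smul_eq_mul, mul_pow, Finset.prod_mul_distrib,
    Finset.prod_pow_eq_pow_sum, hdeg]
  ring

theorem continuous_peval {n : ℕ} (p : MvPolynomial (Fin n) ℝ) : Continuous (peval p) := by
  unfold peval
  exact (MvPolynomial.continuous_eval p).comp (by fun_prop)

theorem isHomogeneous_rSq (n k : ℕ) : (rSq n k).IsHomogeneous (2 * k) := by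
  refine MvPolynomial.IsHomogeneous.pow ?_ k
  refine MvPolynomial.IsHomogeneous.sum _ _ _ fun i _ => ?_
  simpa using (MvPolynomial.isHomogeneous_X ℝ i).pow 2

theorem peval_rSq {n k : ℕ} {x : EuclideanSpace ℝ (Fin n)} (hx : x ∈ Metric.sphere 0 1) :
    peval (rSq n k) x = 1 := by
  have h : ∑ i, x i ^ 2 = 1 := by
    rw [← EuclideanSpace.real_norm_sq_eq, mem_sphere_zero_iff_norm.1 hx, one_pow]
  simp [peval, rSq, h]

theorem abs_peval_le_supNorm {n : ℕ} (p : MvPolynomial (Fin n) ℝ)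
    {x : EuclideanSpace ℝ (Fin n)} (hx : x ∈ Metric.sphere 0 1) : |peval p x| ≤ supNorm p :=
  le_csSup ((isCompact_sphere _ _).image (continuous_peval p).abs).bddAbove ⟨x, hx, rfl⟩

theorem supNorm_nonneg {n : ℕ} (p : MvPolynomial (Fin n) ℝ) : 0 ≤ supNorm p :=
  Real.sSup_nonneg (by rintro _ ⟨x, -, rfl⟩; exact abs_nonneg _)

theorem supNorm_smul {n : ℕ} {r : ℝ} (hr : 0 < r) (p : MvPolynomial (Fin n) ℝ) :
    supNorm (r • p) = r * supNorm p := by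
  unfold supNorm
  rw [← smul_eq_mul, ← Real.sSup_smul_of_nonneg hr.le, ← Set.image_smul, Set.image_image]
  congr 1
  refine Set.image_congr fun x _ => ?_
  simp [peval, MvPolynomial.smul_eval, abs_mul, abs_of_pos hr]

theorem continuous_supNorm_comp {n D : ℕ}
    (φ : EuclideanSpace ℝ (Fin D) →ₗ[ℝ] MvPolynomial (Fin n) ℝ) :
    Continuous fun y => supNorm (φ y) := by
  refine (isCompact_sphere _ _).continuous_sSup
    (f := fun y (x : EuclideanSpace ℝ (Fin n)) => |peval (φ y) x|) ?_
  have h : ∀ y x, peval (φ y) x =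
      ∑ i, y i * peval (φ (EuclideanSpace.basisFun (Fin D) ℝ i)) x := by
    intro y x
    conv_lhs => rw [← (EuclideanSpace.basisFun (Fin D) ℝ).sum_repr y]
    simp [peval, MvPolynomial.smul_eval, map_sum]
  have hc := fun i => continuous_peval (φ (EuclideanSpace.basisFun (Fin D) ℝ i))
  change Continuous fun p : EuclideanSpace ℝ (Fin D) × EuclideanSpace ℝ (Fin n) =>
    |peval (φ p.1) p.2|
  have h' : (fun p : EuclideanSpace ℝ (Fin D) × EuclideanSpace ℝ (Fin n) =>
      |peval (φ p.1) p.2|) = fun p =>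
      |∑ i, p.1 i * peval (φ (EuclideanSpace.basisFun (Fin D) ℝ i)) p.2| :=
    funext fun p => by rw [h]
  rw [h']
  fun_prop

/-- On the sphere `r^{2k} = 1`, so `‖f‖_∞ < 1` forces `f + r^{2k} ≥ 0` there, and homogeneity
spreads this to all of `ℝⁿ`. -/
theorem mem_Ctilde_of_supNorm_lt_one {n k : ℕ} (hk : 1 ≤ k)
    {σ : Measure (EuclideanSpace ℝ (Fin n))} {f : MvPolynomial (Fin n) ℝ}
    (hf : f ∈ Mset n k σ) (h : supNorm f < 1) : f ∈ Ctilde n k σ := by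
  have hom : (f + rSq n k).IsHomogeneous (2 * k) := hf.1.add (isHomogeneous_rSq n k)
  refine ⟨hf, hom, fun x => ?_⟩
  rcases eq_or_ne x 0 with rfl | hx
  · rw [← zero_smul ℝ (0 : EuclideanSpace ℝ (Fin n)), peval_smul_of_isHomogeneous hom,
      zero_pow (by omega), zero_mul]
  · have hx' : ‖x‖⁻¹ • x ∈ Metric.sphere (0 : EuclideanSpace ℝ (Fin n)) 1 := by
      simp [norm_smul, hx]
    have hx2 : x = ‖x‖ • (‖x‖⁻¹ • x) := by
      rw [smul_smul, mul_inv_cancel₀ (norm_ne_zero_iff.2 hx), one_smul]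
    rw [hx2, peval_smul_of_isHomogeneous hom]
    refine mul_nonneg (by positivity) ?_
    have h1 := (abs_le.1 (abs_peval_le_supNorm f hx')).1
    have h2 := peval_rSq (k := k) hx'
    have h3 : peval (f + rSq n k) (‖x‖⁻¹ • x) =
        peval f (‖x‖⁻¹ • x) + peval (rSq n k) (‖x‖⁻¹ • x) := by simp [peval]
    linarith

/-- A form in `M` vanishing on the sphere has `L²(σ)` norm zero, so `‖·‖_∞` is definite on `M`. -/
theorem supNorm_pos {n k D : ℕ} {σ : Measure (EuclideanSpace ℝ (Fin n))}
    (hσ : IsRotInvSphereProb σ)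
    {φ : EuclideanSpace ℝ (Fin D) →ₗ[ℝ] MvPolynomial (Fin n) ℝ}
    (hφ : IsCoordOfM n k D σ φ) {y : EuclideanSpace ℝ (Fin D)} (hy : y ≠ 0) :
    0 < supNorm (φ y) := by
  refine (supNorm_nonneg _).lt_of_ne fun h0 => hy ?_
  have h : pinner σ (φ y) (φ y) = 0 := by
    refine integral_eq_zero_of_ae ?_
    have h1 : ∀ᵐ s ∂σ, s ∈ Metric.sphere (0 : EuclideanSpace ℝ (Fin n)) 1 := hσ.2.1
    filter_upwards [h1] with s hs
    have := abs_peval_le_supNorm (φ y) hs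
    rw [← h0] at this
    simp [abs_nonpos_iff.1 this]
  rw [hφ.2.2] at h
  exact inner_self_eq_zero.1 h

/-- The volume ratio of C̃ is bounded below by the reciprocal of the average
L^∞ norm. -/
theorem volume_ratio_ge_inv_average_sup_norm
    (n k D : ℕ) (hn : 1 ≤ n) (hk : 1 ≤ k)
    (σ : Measure (EuclideanSpace ℝ (Fin n))) (hσ : IsRotInvSphereProb σ)
    (φ : EuclideanSpace ℝ (Fin D) →ₗ[ℝ] MvPolynomial (Fin n) ℝ)
    (hφ : IsCoordOfM n k D σ φ)
    (μ : Measure (EuclideanSpace ℝ (Fin D))) (hμ : IsRotInvSphereProb μ) :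
    (volume (φ ⁻¹' Ctilde n k σ) /
        volume (Metric.ball (0 : EuclideanSpace ℝ (Fin D)) 1)) ^ (1 / (D : ℝ)) ≥
      ENNReal.ofReal ((∫ y, supNorm (φ y) ∂μ)⁻¹) := by
  -- In dimension `0` the unit sphere is empty and carries no probability measure.
  have hD : D ≠ 0 := by
    rintro rfl
    have := hμ.1
    have h : (Metric.sphere (0 : EuclideanSpace ℝ (Fin 0)) 1)ᶜ = Set.univ := by
      ext x
      simp [Subsingleton.elim x 0]
    have h2 := hμ.2.1
    rw [h, measure_univ] at h2
    exact one_ne_zero h2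
  rw [ge_iff_le]
  rcases le_or_gt (∫ y, supNorm (φ y) ∂μ) 0 with ha | ha
  · rw [ENNReal.ofReal_of_nonpos (inv_nonpos.2 ha)]
    exact zero_le
  have key := volume_gauge_lt_one_ge hD (continuous_supNorm_comp φ)
    (fun y hy => supNorm_pos hσ hφ hy)
    (fun r y hr => by rw [map_smul, supNorm_smul hr]) hμ ha
  have hsub : {y | supNorm (φ y) < 1} ⊆ φ ⁻¹' Ctilde n k σ := fun y hy =>
    mem_Ctilde_of_supNorm_lt_one hk (hφ.2.1 ▸ Set.mem_range_self y) hy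
  rw [one_div, ENNReal.le_rpow_inv_iff (by positivity), ENNReal.rpow_natCast,
    ← ENNReal.ofReal_pow (by positivity)]
  rw [ENNReal.le_div_iff_mul_le (Or.inl (Metric.measure_ball_pos _ _ one_pos).ne')
    (Or.inl measure_ball_lt_top.ne)]
  exact key.trans (measure_mono hsub)

end
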